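/- Let Δ be a d-dimensional IP simplex of Gorenstein index g. Then Vol(Δ)·Vol(Δ*) ≤ t_{g,d+1}²/g^{d+2}. Equality holds if and only if there is H ∈ GL(d,ℚ) such that Δ = H·Δ(P), where P is the d×(d+1) matrix whose first d columns are the standard basis vectors e₁,…,e_d and whose last column is (−t_{g,d+1}/s_{g,1}, …, −t_{g,d+1}/s_{g,d}). -/

import Mathlib

open Finset

/-- The origin lies in the interior of the simplex with the given vertices,
i.e. the origin is a convex combination of the vertices with positive coefficients. -/
def OriginInInterior {d : ℕ} (v : Fin (d + 1) → Fin d → ℚ) : Prop :=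
  ∃ w : Fin (d + 1) → ℚ, (∀ i, 0 < w i) ∧ ∑ i, w i = 1 ∧ ∀ j, ∑ i, w i * v i j = 0

/-- An IP simplex, given by its tuple of rational vertices: affinely independent
vertices with the origin in the interior. -/
def IsIPSimplex {d : ℕ} (v : Fin (d + 1) → Fin d → ℚ) : Prop :=
  AffineIndependent ℚ v ∧ OriginInInterior v

/-- The normalized volume `d! · vol(Δ)` of the simplex with the given vertices. -/
def normVol {d : ℕ} (v : Fin (d + 1) → Fin d → ℚ) : ℚ :=
  |(Matrix.of fun i j : Fin d => v i.succ j - v 0 j).det|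

/-- The index of rationality: the least positive integer `k` such that all vertices of
`kΔ` are lattice points. -/
noncomputable def ratIndex {d : ℕ} (v : Fin (d + 1) → Fin d → ℚ) : ℕ :=
  sInf {k : ℕ | 0 < k ∧ ∀ i j, ∃ z : ℤ, (k : ℚ) * v i j = (z : ℚ)}

/-- The `g`-Sylvester sequence: `s_{g,1} = g+1`, `s_{g,k+1} = s_{g,k}(s_{g,k}-1)+1`.
(The value at `0` is junk and never used.) -/
def sylv (g : ℕ) : ℕ → ℕ
  | 0 => 0
  | 1 => g + 1
  | k + 2 => sylv g (k + 1) * (sylv g (k + 1) - 1) + 1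

/-- The truncated `g`-Sylvester sequence `t_{g,k} = s_{g,k} - 1`. -/
def tsylv (g k : ℕ) : ℕ := sylv g k - 1

/-- The extremal `d×(d+1)` vertex matrix for the Mahler volume bound: the first `d`
columns are the standard basis vectors `e_1,…,e_d` and the last column is
`(-t_{g,d+1}/s_{g,1}, …, -t_{g,d+1}/s_{g,d})`. -/
def PMahler (g d : ℕ) : Fin (d + 1) → Fin d → ℚ := fun i j =>
  if i.val < d then (if j.val = i.val then 1 else 0)
  else -((tsylv g (d + 1) : ℚ) / (sylv g (j.val + 1) : ℚ))


lemma abel_aux (c D : ℕ → ℝ) (n : ℕ) (hc : ∀ i, i < n → c i ≤ c (i + 1))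
    (hS : ∀ j, j < n + 1 → 0 ≤ ∑ i ∈ range j, D i) :
    ∑ i ∈ range (n + 1), c i * D i ≤ c n * ∑ i ∈ range (n + 1), D i := by
  induction n with
  | zero => simp
  | succ n ih =>
    have h1 := ih (fun i hi => hc i (by omega)) (fun j hj => hS j (by omega))
    rw [sum_range_succ, sum_range_succ D]
    have h2 := hS (n + 1) (by omega)
    have h3 := hc n (by omega)
    nlinarith [mul_le_mul_of_nonneg_right h3 h2]

lemma major_aux (a b : ℕ → ℝ) (n : ℕ) (ha : ∀ i, i < n → 0 < a i) (hb : ∀ i, i < n → 0 < b i)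
    (hanti : ∀ i, i + 1 < n → a (i + 1) ≤ a i)
    (hS : ∀ j, j < n → ∑ i ∈ range j, a i ≤ ∑ i ∈ range j, b i)
    (hn : ∑ i ∈ range n, b i ≤ ∑ i ∈ range n, a i) :
    ∏ i ∈ range n, b i ≤ ∏ i ∈ range n, a i ∧
      (∏ i ∈ range n, b i = ∏ i ∈ range n, a i → ∀ i, i < n → a i = b i) := by
  rcases n with _ | n
  · simp
  have h1 : ∑ i ∈ range (n + 1), (b i / a i - 1) ≤ 0 := by
    have h := abel_aux (fun i => (a i)⁻¹) (fun i => b i - a i) n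
      (fun i hi => inv_anti₀ (ha _ (by omega)) (hanti i (by omega)))
      (fun j hj => by simpa [sum_sub_distrib] using hS j hj)
    have e : ∑ i ∈ range (n + 1), (b i / a i - 1)
        = ∑ i ∈ range (n + 1), (a i)⁻¹ * (b i - a i) := by
      refine sum_congr rfl fun i hi => ?_
      have := ha i (by simpa using hi)
      field_simp
    rw [e]
    refine h.trans (mul_nonpos_of_nonneg_of_nonpos (inv_nonneg.2 (ha n (by omega)).le) ?_)
    simpa [sum_sub_distrib] using hn
  have hPa : 0 < ∏ i ∈ range (n + 1), a i := prod_pos fun i hi => ha i (by simpa using hi)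
  have hr : ∀ i, i < n + 1 → 0 < b i / a i := fun i hi => div_pos (hb i hi) (ha i hi)
  have hle : ∀ i ∈ range (n + 1), b i / a i ≤ Real.exp (b i / a i - 1) := fun i _ => by
    have := Real.add_one_le_exp (b i / a i - 1)
    linarith
  have hexp : ∏ i ∈ range (n + 1), Real.exp (b i / a i - 1) ≤ 1 := by
    rw [← Real.exp_sum]
    simpa using h1
  have hP : ∏ i ∈ range (n + 1), b i = (∏ i ∈ range (n + 1), b i / a i) *
      ∏ i ∈ range (n + 1), a i := by
    rw [prod_div_distrib, div_mul_cancel₀ _ hPa.ne']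
  constructor
  · rw [hP]
    have := (prod_le_prod (fun i hi => (hr i (by simpa using hi)).le) hle).trans hexp
    nlinarith
  · intro heq
    by_contra! hne
    obtain ⟨i, hi, hne⟩ := hne
    have hlt : ∏ i ∈ range (n + 1), b i / a i < ∏ i ∈ range (n + 1), Real.exp (b i / a i - 1) := by
      refine prod_lt_prod (fun i hi => hr i (by simpa using hi)) hle ⟨i, by simpa using hi, ?_⟩
      have : b i / a i - 1 ≠ 0 := by
        intro h
        have := ha i hi
        field_simp at h
        exact hne (by linarith)
      have := Real.add_one_lt_exp this
      linarith
    have := hlt.trans_le hexp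
    rw [hP] at heq
    nlinarith

lemma sylv_succ_eq (g k : ℕ) : sylv g (k + 1) = tsylv g (k + 1) + 1 := by
  unfold tsylv
  cases k with
  | zero => simp [sylv]
  | succ k => simp [sylv]

lemma tsylv_succ (g k : ℕ) : tsylv g (k + 2) = sylv g (k + 1) * tsylv g (k + 1) := by
  simp [tsylv, sylv]

lemma tsylv_one (g : ℕ) : tsylv g 1 = g := by simp [tsylv, sylv]

lemma tsylv_pos (g : ℕ) (hg : 1 ≤ g) (k : ℕ) : 0 < tsylv g (k + 1) := by
  induction k with
  | zero => rw [tsylv_one]; omega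
  | succ k ih => rw [tsylv_succ, sylv_succ_eq]; positivity

lemma sylv_pos (g k : ℕ) : 0 < sylv g (k + 1) := by
  rw [sylv_succ_eq]; omega

lemma sylv_prod (g k : ℕ) : g * ∏ i ∈ range k, sylv g (i + 1) = tsylv g (k + 1) := by
  induction k with
  | zero => simp [tsylv_one]
  | succ k ih => rw [prod_range_succ, ← mul_assoc, ih, tsylv_succ, mul_comm]

lemma sylv_sum (g : ℕ) (hg : 1 ≤ g) (k : ℕ) :
    ∑ i ∈ range k, (1 : ℝ) / (sylv g (i + 1) : ℝ) = 1 / g - 1 / tsylv g (k + 1) := by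
  induction k with
  | zero => simp [tsylv_one]
  | succ k ih =>
    rw [sum_range_succ, ih, tsylv_succ, sylv_succ_eq]
    have : (0 : ℝ) < tsylv g (k + 1) := by exact_mod_cast tsylv_pos g hg k
    push_cast
    field_simp
    ring

lemma tail_ge (g : ℕ) (hg : 1 ≤ g) (m : ℕ → ℕ) (k : ℕ) (hm : ∀ i, i < k → 0 < m i)
    (h : ∑ i ∈ range k, (1 : ℝ) / m i < 1 / g) :
    1 / ((g : ℝ) * ∏ i ∈ range k, (m i : ℝ)) ≤ 1 / g - ∑ i ∈ range k, (1 : ℝ) / m i := by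
  have key : ∃ z : ℤ, (∏ i ∈ range k, (m i : ℝ)) * ∑ i ∈ range k, (1 : ℝ) / m i = z := by
    clear h
    induction k with
    | zero => exact ⟨0, by simp⟩
    | succ k ih =>
      obtain ⟨z, hz⟩ := ih (fun i hi => hm i (by omega))
      refine ⟨z * m k + ∏ i ∈ range k, (m i : ℤ), ?_⟩
      have : (0 : ℝ) < m k := by exact_mod_cast hm k (by omega)
      push_cast
      rw [← hz, sum_range_succ, prod_range_succ]
      field_simp
  obtain ⟨z, hz⟩ := key
  have hP : 0 < ∏ i ∈ range k, (m i : ℝ) :=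
    prod_pos fun i hi => by exact_mod_cast hm i (by simpa using hi)
  have hg' : (0 : ℝ) < g := by exact_mod_cast hg
  set P := ∏ i ∈ range k, (m i : ℝ) with hPdef
  set S := ∑ i ∈ range k, (1 : ℝ) / m i with hS
  have h1 : 0 < P - g * z := by
    rw [← hz]
    have : g * S < 1 := by rwa [lt_div_iff₀ hg', mul_comm] at h
    nlinarith
  have h2 : (1 : ℝ) ≤ P - g * z := by
    have e : P - g * z = (((∏ i ∈ range k, (m i : ℤ)) - g * z : ℤ) : ℝ) := by
      push_cast; rfl
    rw [e] at h1 ⊢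
    exact_mod_cast h1
  rw [← hz] at h2
  rw [div_le_iff₀ (by positivity)]
  field_simp
  linarith

lemma curtiss (g : ℕ) (hg : 1 ≤ g) (m : ℕ → ℕ) (d : ℕ) (hm : ∀ i, i < d → 0 < m i)
    (hmono : ∀ i, i + 1 < d → m i ≤ m (i + 1))
    (hlt : ∀ k, k ≤ d → ∑ i ∈ range k, (1 : ℝ) / m i < 1 / g) (k : ℕ) (hk : k ≤ d) :
    ∑ i ∈ range k, (1 : ℝ) / m i ≤ ∑ i ∈ range k, (1 : ℝ) / (sylv g (i + 1) : ℝ) := by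
  induction k using Nat.strong_induction_on with
  | _ k ih =>
    by_contra! hcon
    have hmR : ∀ i, i < d → (0 : ℝ) < m i := fun i hi => by exact_mod_cast hm i hi
    have hM := (major_aux (fun i => (1 : ℝ) / m i) (fun i => (1 : ℝ) / (sylv g (i + 1) : ℝ)) k
      (fun i hi => one_div_pos.2 (hmR i (by omega)))
      (fun i hi => one_div_pos.2 (by exact_mod_cast sylv_pos g i))
      (fun i hi => one_div_le_one_div_of_le (hmR i (by omega))
        (by exact_mod_cast hmono i (by omega)))
      (fun j hj => ih j hj (by omega)) hcon.le).1
    have ht := tail_ge g hg m k (fun i hi => hm i (by omega)) (hlt k hk)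
    rw [sylv_sum g hg] at hcon
    simp only [one_div, prod_inv_distrib] at hM
    have hsp : (tsylv g (k + 1) : ℝ) = g * ∏ i ∈ range k, (sylv g (i + 1) : ℝ) := by
      rw [← sylv_prod]; push_cast; rfl
    rw [hsp] at hcon
    have hg' : (0 : ℝ) < g := by exact_mod_cast hg
    have : (1 : ℝ) / (g * ∏ i ∈ range k, (sylv g (i + 1) : ℝ)) ≤ 1 / (g * ∏ i ∈ range k, (m i : ℝ)) := by
      simp only [one_div, mul_inv]
      exact mul_le_mul_of_nonneg_left hM (by positivity)
    linarith

/-- the extremal denominators -/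
def extr (g d i : ℕ) : ℕ := if i < d then sylv g (i + 1) else tsylv g (d + 1)

lemma extr_pos (g : ℕ) (hg : 1 ≤ g) (d i : ℕ) : 0 < extr g d i := by
  unfold extr
  split_ifs
  · exact sylv_pos g i
  · exact tsylv_pos g hg d

lemma extr_prod (g d : ℕ) : g * ∏ i ∈ range (d + 1), extr g d i = tsylv g (d + 1) ^ 2 := by
  rw [prod_range_succ, ← mul_assoc]
  have : ∏ i ∈ range d, extr g d i = ∏ i ∈ range d, sylv g (i + 1) :=
    prod_congr rfl fun i hi => by simp [extr, mem_range.1 hi]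
  rw [this, sylv_prod]
  simp [extr, sq]

lemma egypt (g : ℕ) (hg : 1 ≤ g) (m : ℕ → ℕ) (d : ℕ) (hm : ∀ i, i < d + 1 → 0 < m i)
    (hmono : ∀ i, i + 1 < d + 1 → m i ≤ m (i + 1))
    (hsum : ∑ i ∈ range (d + 1), (1 : ℝ) / m i = 1 / g) :
    ∏ i ∈ range (d + 1), m i ≤ ∏ i ∈ range (d + 1), extr g d i ∧
    (∏ i ∈ range (d + 1), m i = ∏ i ∈ range (d + 1), extr g d i → ∀ i, i < d + 1 → m i = extr g d i) := by
  have hmR : ∀ i, i < d + 1 → (0 : ℝ) < m i := fun i hi => by exact_mod_cast hm i hi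
  have heR : ∀ i, (0 : ℝ) < extr g d i := fun i => by exact_mod_cast extr_pos g hg d i
  have hext : ∀ k, k ≤ d → ∑ i ∈ range k, (1 : ℝ) / extr g d i =
      ∑ i ∈ range k, (1 : ℝ) / (sylv g (i + 1) : ℝ) := fun k hk =>
    sum_congr rfl fun i hi => by
      have := mem_range.1 hi
      simp [extr, show i < d by omega]
  have hlt : ∀ k, k ≤ d → ∑ i ∈ range k, (1 : ℝ) / m i < 1 / g := fun k hk => by
    rw [← hsum]
    refine sum_lt_sum_of_subset (i := d) (range_subset_range.2 (by omega)) (by simp) (by simpa using hk)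
      (one_div_pos.2 (hmR d (by omega))) fun j hj _ => ?_
    exact (one_div_pos.2 (hmR j (by simpa using hj))).le
  have hc := curtiss g hg m d (fun i hi => hm i (by omega)) (fun i hi => hmono i (by omega)) hlt
  have hM := major_aux (fun i => (1 : ℝ) / m i) (fun i => (1 : ℝ) / extr g d i) (d + 1)
      (fun i hi => one_div_pos.2 (hmR i (by omega)))
      (fun i hi => one_div_pos.2 (heR i))
      (fun i hi => one_div_le_one_div_of_le (hmR i (by omega))
        (by exact_mod_cast hmono i (by omega)))
      (fun j hj => by rw [hext j (by omega)]; exact hc j (by omega))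
      (by
        rw [hsum, sum_range_succ, hext d le_rfl, sylv_sum g hg]
        simp [extr])
  simp only [one_div, prod_inv_distrib, inv_inj] at hM
  have hPm : (0 : ℝ) < ∏ i ∈ range (d + 1), (m i : ℝ) :=
    prod_pos fun i hi => hmR i (by simpa using hi)
  have hPe : (0 : ℝ) < ∏ i ∈ range (d + 1), (extr g d i : ℝ) := prod_pos fun i hi => heR i
  refine ⟨?_, ?_⟩
  · have := (inv_le_inv₀ hPe hPm).1 hM.1
    exact_mod_cast this
  · intro h i hi
    have := hM.2 (by exact_mod_cast h.symm) i hi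
    exact_mod_cast this

lemma pair_eq {d : ℕ} (v u : Fin (d + 1) → Fin d → ℚ) (w : Fin (d + 1) → ℚ)
    (hw : ∀ i, 0 < w i) (hw1 : ∑ i, w i = 1) (hw0 : ∀ j, ∑ i, w i * v i j = 0)
    (hu : ∀ i j, i ≠ j → ∑ c, u i c * v j c = -1) (i j : Fin (d + 1)) :
    ∑ c, u i c * v j c = (if i = j then (w i)⁻¹ else 0) - 1 := by
  by_cases h : i = j
  · subst h
    have h0 : ∑ j, w j * ∑ c, u i c * v j c = 0 := by
      simp_rw [mul_sum]
      rw [sum_comm]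
      refine sum_eq_zero fun c _ => ?_
      have := congrArg (fun x => u i c * x) (hw0 c)
      simp only [mul_sum, mul_zero] at this
      rw [← this]
      exact sum_congr rfl fun _ _ => by ring
    rw [← add_sum_erase _ _ (mem_univ i)] at h0 hw1
    have h1 : ∑ j ∈ univ.erase i, w j * ∑ c, u i c * v j c = - ∑ j ∈ univ.erase i, w j := by
      rw [← sum_neg_distrib]
      refine sum_congr rfl fun j hj => ?_
      rw [hu i j (ne_of_mem_erase hj).symm]; ring
    rw [h1] at h0
    have := hw i
    simp only [if_true]
    field_simp
    linarith
  · rw [hu i j h]; simp [h]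

lemma vol_prod {d : ℕ} (v u : Fin (d + 1) → Fin d → ℚ) (w : Fin (d + 1) → ℚ)
    (hw : ∀ i, 0 < w i) (hw1 : ∑ i, w i = 1) (hw0 : ∀ j, ∑ i, w i * v i j = 0)
    (hu : ∀ i j, i ≠ j → ∑ c, u i c * v j c = -1) :
    normVol v * normVol u = ∏ i, (w i)⁻¹ := by
  have hp := pair_eq v u w hw hw1 hw0 hu
  unfold normVol
  rw [← abs_mul, mul_comm, ← Matrix.det_transpose (Matrix.of fun i j : Fin d => v i.succ j - v 0 j),
    ← Matrix.det_mul]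
  have hM : (Matrix.of fun i j : Fin d => u i.succ j - u 0 j) *
      (Matrix.of fun i j : Fin d => v i.succ j - v 0 j).transpose =
      Matrix.diagonal (fun i : Fin d => (w i.succ)⁻¹) *
       (1 + Matrix.replicateCol Unit (fun i : Fin d => w i.succ) *
        Matrix.replicateRow Unit (fun _ : Fin d => (w 0)⁻¹)) := by
    ext i j
    rw [Matrix.mul_add, Matrix.mul_one, Matrix.add_apply, Matrix.diagonal_mul]
    simp only [Matrix.mul_apply, Matrix.transpose_apply, Matrix.of_apply, Matrix.replicateCol_apply,
      Matrix.replicateRow_apply, Matrix.diagonal_apply, univ_unique, sum_const, card_singleton,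
      one_smul]
    have : ∑ c, (u i.succ c - u 0 c) * (v j.succ c - v 0 c) =
      ∑ c, u i.succ c * v j.succ c - ∑ c, u i.succ c * v 0 c - ∑ c, u 0 c * v j.succ c
        + ∑ c, u 0 c * v 0 c := by
      rw [← sum_sub_distrib, ← sum_sub_distrib, ← sum_add_distrib]
      exact sum_congr rfl fun _ _ => by ring
    rw [this, hp, hp, hp, hp, inv_mul_cancel_left₀ (hw i.succ).ne']
    simp [Fin.succ_ne_zero, (Fin.succ_ne_zero _).symm]
  rw [hM, Matrix.det_mul, Matrix.det_diagonal, Matrix.det_one_add_replicateCol_mul_replicateRow,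
    Fin.prod_univ_succ]
  have h2 : 1 + (fun _ : Fin d => (w 0)⁻¹) ⬝ᵥ (fun i : Fin d => w i.succ) = (w 0)⁻¹ := by
    simp only [dotProduct, ← mul_sum]
    rw [Fin.sum_univ_succ] at hw1
    have := hw 0
    field_simp
    linarith
  rw [h2, abs_of_pos, mul_comm]
  exact mul_pos (prod_pos fun i _ => inv_pos.2 (hw _)) (inv_pos.2 (hw _))

lemma den_exists {d g : ℕ} (hg : 1 ≤ g) (v u : Fin (d + 1) → Fin d → ℚ) (w : Fin (d + 1) → ℚ)
    (hw : ∀ i, 0 < w i) (hw1 : ∑ i, w i = 1) (hw0 : ∀ j, ∑ i, w i * v i j = 0)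
    (hu : ∀ i j, i ≠ j → ∑ c, u i c * v j c = -1) (hGor : ratIndex v * ratIndex u = g)
    (i : Fin (d + 1)) : ∃ m : ℕ, 0 < m ∧ (w i)⁻¹ = m / g := by
  have hp := pair_eq v u w hw hw1 hw0 hu i i
  have hspec : ∀ x : Fin (d + 1) → Fin d → ℚ, 0 < ratIndex x →
      ∀ i j, ∃ z : ℤ, (ratIndex x : ℚ) * x i j = (z : ℚ) := fun x hx =>
    (Nat.sInf_mem (Nat.nonempty_of_pos_sInf hx)).2
  have hv := hspec v (Nat.pos_of_ne_zero fun h => by rw [h] at hGor; omega) i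
  have hu' := hspec u (Nat.pos_of_ne_zero fun h => by rw [h] at hGor; omega) i
  choose a ha using hv
  choose b hb using hu'
  have hg' : (0 : ℚ) < g := by exact_mod_cast hg
  have hz : (g : ℚ) * (w i)⁻¹ = ((∑ c, b c * a c + g : ℤ) : ℚ) := by
    push_cast
    simp only [if_true] at hp
    rw [eq_add_of_sub_eq hp.symm, mul_add, mul_one, mul_sum, ← hGor]
    congr 1
    refine sum_congr rfl fun c _ => ?_
    rw [← ha, ← hb]; push_cast; ring
  have hpos : (0 : ℚ) < g * (w i)⁻¹ := mul_pos hg' (inv_pos.2 (hw i))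
  rw [hz] at hpos
  have hpos' : (0 : ℤ) < ∑ c, b c * a c + g := by exact_mod_cast hpos
  obtain ⟨m, hm⟩ := Int.eq_ofNat_of_zero_le hpos'.le
  rw [hm] at hz hpos'
  refine ⟨m, by exact_mod_cast hpos', ?_⟩
  rw [eq_div_iff hg'.ne', mul_comm, hz]; simp

lemma PM_cast (g d : ℕ) (i j : Fin d) : PMahler g d i.castSucc j = if j = i then 1 else 0 := by
  simp [PMahler, Fin.ext_iff]

lemma PM_last (g d : ℕ) (j : Fin d) :
    PMahler g d (Fin.last d) j = -((tsylv g (d + 1) : ℚ) / (sylv g (j.val + 1) : ℚ)) := by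
  simp [PMahler]

lemma extr_sum (g : ℕ) (hg : 1 ≤ g) (d : ℕ) :
    ∑ i : Fin (d + 1), (1 : ℚ) / extr g d i = 1 / g := by
  have h : ∑ i ∈ range (d + 1), (1 : ℝ) / extr g d i = 1 / g := by
    rw [sum_range_succ, sum_congr rfl (fun i hi => by
      rw [show extr g d i = sylv g (i + 1) by simp [extr, mem_range.1 hi]]), sylv_sum g hg]
    simp [extr]
  rw [Fin.sum_univ_eq_sum_range (fun i => (1 : ℚ) / extr g d i)]
  have h' : ((∑ i ∈ range (d + 1), (1 : ℚ) / extr g d i : ℚ) : ℝ) = ((1 / g : ℚ) : ℝ) := by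
    push_cast
    exact h
  exact Rat.cast_injective h'

lemma bound_eq (g : ℕ) (hg : 1 ≤ g) (d : ℕ) :
    (tsylv g (d + 1) : ℚ) ^ 2 / (g : ℚ) ^ (d + 2) = ∏ i : Fin (d + 1), ((extr g d i : ℚ) / g) := by
  have hg' : (0 : ℚ) < g := by exact_mod_cast hg
  rw [prod_div_distrib, prod_const, Fin.prod_univ_eq_prod_range (fun i => (extr g d i : ℚ))]
  have := extr_prod g d
  have h : (g : ℚ) * ∏ i ∈ range (d + 1), (extr g d i : ℚ) = (tsylv g (d + 1) : ℚ) ^ 2 := by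
    exact_mod_cast this
  rw [← h]
  simp only [card_univ, Fintype.card_fin]
  rw [div_eq_div_iff (by positivity) (by positivity)]
  ring

lemma equality_of_map {d g : ℕ} (hg : 1 ≤ g) (v : Fin (d + 1) → Fin d → ℚ) (w : Fin (d + 1) → ℚ)
    (hw1 : ∑ i, w i = 1) (hw0 : ∀ j, ∑ i, w i * v i j = 0)
    (H : Matrix (Fin d) (Fin d) ℚ) (σ : Equiv.Perm (Fin (d + 1))) (hH : H.det ≠ 0)
    (hv : ∀ i, v (σ i) = H.mulVec (PMahler g d i)) :
    ∀ i, (w (σ i))⁻¹ = (extr g d i : ℚ) / g := by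
  have hg' : (0 : ℚ) < g := by exact_mod_cast hg
  have hz : H.mulVec (∑ i, w (σ i) • PMahler g d i) = 0 := by
    rw [Matrix.mulVec_sum]
    simp_rw [Matrix.mulVec_smul, ← hv]
    ext j
    rw [Equiv.sum_comp σ (fun i => w i • v i)]
    simpa using hw0 j
  have hz' := Matrix.eq_zero_of_mulVec_eq_zero hH hz
  have ht : (0 : ℚ) < tsylv g (d + 1) := by exact_mod_cast tsylv_pos g hg d
  have h1 : ∀ i, w (σ i) = w (σ (Fin.last d)) * tsylv g (d + 1) * (1 / extr g d i) := by
    intro i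
    refine Fin.lastCases ?_ (fun j => ?_) i
    · simp only [extr, Fin.val_last, lt_irrefl, if_false]
      field_simp
    · have := congrFun hz' j
      simp only [Fin.sum_univ_castSucc, Pi.add_apply, Finset.sum_apply, Pi.smul_apply, PM_cast, PM_last,
        smul_eq_mul, mul_ite, mul_one, mul_zero, sum_ite_eq, mem_univ, if_true, Pi.zero_apply] at this
      simp only [extr, Fin.val_castSucc, j.isLt, if_true]
      rw [eq_neg_of_add_eq_zero_left this]
      ring
  have h2 : w (σ (Fin.last d)) * tsylv g (d + 1) = g := by
    rw [← Equiv.sum_comp σ, sum_congr rfl (fun i _ => h1 i), ← mul_sum, extr_sum g hg] at hw1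
    field_simp at hw1
    exact hw1
  intro i
  rw [h1, h2]
  simp [mul_comm, div_eq_mul_inv]

lemma map_of_equality {d g : ℕ} (hg : 1 ≤ g) (v u : Fin (d + 1) → Fin d → ℚ) (w : Fin (d + 1) → ℚ)
    (hw : ∀ i, 0 < w i) (hw1 : ∑ i, w i = 1) (hw0 : ∀ j, ∑ i, w i * v i j = 0)
    (hu : ∀ i j, i ≠ j → ∑ c, u i c * v j c = -1)
    (σ : Equiv.Perm (Fin (d + 1))) (hσ : ∀ i, (w (σ i))⁻¹ = (extr g d i : ℚ) / g) :
    ∃ H : Matrix (Fin d) (Fin d) ℚ, H.det ≠ 0 ∧ ∀ i, v (σ i) = H.mulVec (PMahler g d i) := by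
  have hp := pair_eq v u w hw hw1 hw0 hu
  have hg' : (0 : ℚ) < g := by exact_mod_cast hg
  have hw' : ∀ i, w (σ i) = g / extr g d i := fun i => by
    rw [← inv_inv (w (σ i)), hσ, inv_div]
  refine ⟨Matrix.of fun r c => v (σ c.castSucc) r, ?_, ?_⟩
  · intro hdet
    obtain ⟨c, hc, hc0⟩ := Matrix.exists_mulVec_eq_zero_iff.2 hdet
    have key : ∀ k, ∑ i : Fin d, c i * ∑ r, u (σ k) r * v (σ i.castSucc) r = 0 := by
      intro k
      simp_rw [mul_sum]
      rw [sum_comm]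
      refine sum_eq_zero fun r _ => ?_
      have := congrFun hc0 r
      simp only [Matrix.mulVec, dotProduct, Matrix.of_apply, Pi.zero_apply] at this
      rw [← mul_zero (u (σ k) r), ← this, mul_sum]
      exact sum_congr rfl fun _ _ => by ring
    have hs : ∑ i, c i = 0 := by
      have := key (Fin.last d)
      simp only [hp, EmbeddingLike.apply_eq_iff_eq] at this
      simpa [(Fin.castSucc_lt_last _).ne'] using this
    apply hc
    ext j
    have := key j.castSucc
    simp only [hp, EmbeddingLike.apply_eq_iff_eq, mul_sub, sum_sub_distrib, mul_one, hs,
      Fin.castSucc_inj, mul_ite, mul_zero, sum_ite_eq, mem_univ, if_true, sub_zero] at this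
    simpa [(hw _).ne'] using this
  · intro i
    refine Fin.lastCases ?_ (fun j => ?_) i
    · ext r
      simp only [Matrix.mulVec, dotProduct, Matrix.of_apply, PM_last]
      have h0 := hw0 r
      rw [← Equiv.sum_comp σ, Fin.sum_univ_castSucc] at h0
      have ht : (0 : ℚ) < tsylv g (d + 1) := by exact_mod_cast tsylv_pos g hg d
      simp only [hw', extr, Fin.val_last, lt_irrefl, if_false, Fin.val_castSucc, Fin.is_lt, if_true] at h0
      have e : ∑ x : Fin d, v (σ x.castSucc) r * -((tsylv g (d + 1) : ℚ) / sylv g (x.val + 1)) =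
        -((tsylv g (d + 1) : ℚ) / g) * ∑ x : Fin d, (g : ℚ) / sylv g (x.val + 1) * v (σ x.castSucc) r := by
        rw [mul_sum]
        refine sum_congr rfl fun x _ => ?_
        field_simp
      rw [e, eq_neg_of_add_eq_zero_left h0]
      field_simp
    · ext r
      simp [Matrix.mulVec, dotProduct, PM_cast]

/-- For a `d`-dimensional IP simplex `Δ` of Gorenstein index `g`
(with dual simplex `Δ*` having vertices `u`), one has
`Vol(Δ)·Vol(Δ*) ≤ t_{g,d+1}² / g^{d+2}`, with equality iff `Δ = H·Δ(P)` for some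
`H ∈ GL(d,ℚ)`, where `P` is the listed extremal matrix. -/
theorem mahler_volume_bound
    (d g : ℕ) (hd : 2 ≤ d) (hg : 1 ≤ g)
    (v : Fin (d + 1) → Fin d → ℚ) (hIP : IsIPSimplex v)
    (u : Fin (d + 1) → Fin d → ℚ)
    (hu : ∀ i j, i ≠ j → ∑ c, u i c * v j c = -1)
    (hGor : ratIndex v * ratIndex u = g) :
    normVol v * normVol u ≤ (tsylv g (d + 1) : ℚ) ^ 2 / (g : ℚ) ^ (d + 2) ∧
      (normVol v * normVol u = (tsylv g (d + 1) : ℚ) ^ 2 / (g : ℚ) ^ (d + 2) ↔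
        ∃ (H : Matrix (Fin d) (Fin d) ℚ) (σ : Equiv.Perm (Fin (d + 1))),
          H.det ≠ 0 ∧ ∀ i, v (σ i) = H.mulVec (PMahler g d i)) := by
  obtain ⟨-, w, hw, hw1, hw0⟩ := hIP
  have hg' : (0 : ℚ) < g := by exact_mod_cast hg
  rw [vol_prod v u w hw hw1 hw0 hu, bound_eq g hg]
  choose m hm hmw using den_exists hg v u w hw hw1 hw0 hu hGor
  set σ := Tuple.sort m with hσ
  have hmono : Monotone (m ∘ σ) := Tuple.monotone_sort m
  let M : ℕ → ℕ := fun i => if h : i < d + 1 then m (σ ⟨i, h⟩) else 0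
  have hM : ∀ i : Fin (d + 1), M i = m (σ i) := fun i => by simp only [M, i.isLt, dif_pos]
  have hMs : ∑ i ∈ range (d + 1), (1 : ℚ) / M i = 1 / g := by
    rw [← Fin.sum_univ_eq_sum_range (fun i => (1 : ℚ) / M i)]
    rw [← Equiv.sum_comp σ] at hw1
    rw [← mul_right_inj' hg'.ne', mul_sum, mul_one_div_cancel hg'.ne']
    refine Eq.trans ?_ hw1
    refine sum_congr rfl fun i _ => ?_
    rw [hM, ← inv_inv (w (σ i)), hmw, inv_div, mul_one_div]
  have hE := egypt g hg M d
    (fun i hi => by simp only [M, hi, dif_pos]; exact hm _)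
    (fun i hi => by
      simp only [M, hi, show i < d + 1 by omega, dif_pos]
      exact hmono (by simp [Fin.le_def]))
    (by
      have h' : ((∑ i ∈ range (d + 1), (1 : ℚ) / M i : ℚ) : ℝ) = ((1 / g : ℚ) : ℝ) := by rw [hMs]
      push_cast at h'
      exact h')
  have hprod : ∏ i, (w i)⁻¹ = ∏ i : Fin (d + 1), ((M i : ℚ) / g) := by
    rw [← Equiv.prod_comp σ]
    exact prod_congr rfl fun i _ => by rw [hmw, hM]
  have hle : ∏ i : Fin (d + 1), ((M i : ℚ) / g) ≤ ∏ i : Fin (d + 1), ((extr g d i : ℚ) / g) ∧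
      (∏ i : Fin (d + 1), ((M i : ℚ) / g) = ∏ i : Fin (d + 1), ((extr g d i : ℚ) / g) →
        ∀ i : Fin (d + 1), M i = extr g d i) := by
    simp only [prod_div_distrib, prod_const]
    rw [Fin.prod_univ_eq_prod_range (fun i => (extr g d i : ℚ)),
      Fin.prod_univ_eq_prod_range (fun i => (M i : ℚ))]
    refine ⟨?_, fun h i => hE.2 ?_ i i.isLt⟩
    · have := hE.1
      refine div_le_div_of_nonneg_right ?_ (by positivity)
      exact_mod_cast this
    · rw [div_left_inj' (by positivity)] at h
      exact_mod_cast h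
  rw [hprod]
  refine ⟨hle.1, fun h => ?_, fun ⟨H, τ, hH, hv⟩ => ?_⟩
  · obtain ⟨H, h1, h2⟩ := map_of_equality hg v u w hw hw1 hw0 hu σ
      (fun i => by rw [hmw, ← hM, hle.2 h i])
    exact ⟨H, σ, h1, h2⟩
  · rw [← hprod, ← Equiv.prod_comp τ]
    exact prod_congr rfl fun i _ => equality_of_map hg v w hw1 hw0 H τ hH hv i
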